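/- arXiv:1606.08974 — 2 statements merged into one kernel-verified Lean document; each statement's English description precedes it below -/
import Mathlib

section
/- Let n ≥ 2, θ > 0, and let X_1,…,X_n be i.i.d. Uniform[0,θ] random variables. Then n·τ_n − 1 = Σ_{i=1}^{n−1} X_(i)/X_(n) has the same distribution as the sum of n−1 independent Uniform[0,1] random variables (the Irwin–Hall distribution with parameter n−1), where τ_n = X̄_n / X_(n), X̄_n = (1/n)·Σ_{i=1}^n X_i, X_(n) = max{X_1,…,X_n}, and X_(1) ≤ … ≤ X_(n) are the order statistics. -/
open MeasureTheory ProbabilityTheory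

/-- The uniform probability measure on `[0, θ]`. -/
noncomputable def uniformMeasure (θ : ℝ) : Measure ℝ :=
  ENNReal.ofReal θ⁻¹ • volume.restrict (Set.Icc 0 θ)

/-- The joint law of an i.i.d. sample of size `n` from `Uniform[0, θ]`. -/
noncomputable def iidUniform (n : ℕ) (θ : ℝ) : Measure (Fin n → ℝ) :=
  Measure.pi fun _ => uniformMeasure θ

/-- Sample maximum. -/
noncomputable def sampleMax {n : ℕ} (x : Fin n → ℝ) : ℝ := ⨆ i, x i

/-- Empirical mean. -/
noncomputable def sampleMean {n : ℕ} (x : Fin n → ℝ) : ℝ := (∑ i, x i) / n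

/-- The mean/max statistic `τ_n`. -/
noncomputable def tau {n : ℕ} (x : Fin n → ℝ) : ℝ := sampleMean x / sampleMax x

/-- The order statistics of a sample: the sample rearranged in nondecreasing order. -/
noncomputable def sortedVec {n : ℕ} (x : Fin n → ℝ) : Fin n → ℝ := x ∘ Tuple.sort x

/-- The Irwin–Hall distribution with parameter `m`: the law of the sum of `m`
independent `Uniform[0,1]` random variables. -/
noncomputable def irwinHall (m : ℕ) : Measure ℝ :=
  (iidUniform m 1).map fun u => ∑ i, u i

/-!
Cut the sample space according to which coordinate `k` is the largest. There `n τ - 1` is the sum of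
the ratios `x i / x k`, `i ≠ k`. Given `x k = t`, the other coordinates are independent, each
distributed as the law of a single observation truncated to `(-∞, t]`. For the uniform law,
dividing such a variable by `t` gives a uniform variable on `[0, 1]` whatever the level `t`, so
the ratios are i.i.d. `Uniform[0, 1]` on every piece.

Only the last property of the uniform law matters. The laws with density proportional to
`x ^ (α - 1)` on `[0, θ]` share it, with `Beta(α, 1)` in place of `Uniform[0, 1]`.
-/

open Set

theorem map_eq_of_forall_map_restrict_eq {α β ι : Type*} [MeasurableSpace α] [MeasurableSpace β]
    [Countable ι] {P : Measure α} [IsProbabilityMeasure P] {ν : Measure β} {f : α → β}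
    (hf : AEMeasurable f P) {s : ι → Set α} (hs : ∀ i, NullMeasurableSet (s i) P)
    (hcover : ⋃ i, s i = univ) (hdisj : Pairwise (Function.onFun (AEDisjoint P) s))
    (h : ∀ i, (P.restrict (s i)).map f = P (s i) • ν) : P.map f = ν := by
  have hsum : P = Measure.sum fun i => P.restrict (s i) := by
    rw [← Measure.restrict_iUnion_ae hdisj hs, hcover, Measure.restrict_univ]
  have hone : ∑' i, P (s i) = 1 := by
    rw [← measure_iUnion₀ hdisj hs, hcover, measure_univ]
  ext t ht
  calc P.map f t
      = ∑' i, (P.restrict (s i)).map f t := by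
        conv_lhs => rw [hsum, Measure.map_sum (hsum ▸ hf), Measure.sum_apply _ ht]
    _ = (∑' i, P (s i)) * ν t := by
        simp only [h, Measure.smul_apply, smul_eq_mul, ENNReal.tsum_mul_right]
    _ = ν t := by rw [hone, one_mul]

theorem measure_pi_eq_lintegral_insertNth {m : ℕ} {α : Fin (m + 1) → Type*}
    [∀ i, MeasurableSpace (α i)] (μ : ∀ i, Measure (α i)) [∀ i, SigmaFinite (μ i)] (k : Fin (m + 1))
    {s : Set (∀ i, α i)} (hs : MeasurableSet s) :
    Measure.pi μ s =
      ∫⁻ t, Measure.pi (fun i => μ (k.succAbove i)) {y | k.insertNth t y ∈ s} ∂μ k := by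
  have he := (measurePreserving_piFinSuccAbove μ k).symm
  rw [← he.measure_preimage hs.nullMeasurableSet, Measure.prod_apply (he.measurable hs)]
  rfl

theorem ae_apply_ne_apply {n : ℕ} {α : Type*} [MeasurableSpace α] [MeasurableEq α]
    (μ : Fin n → Measure α) [∀ i, SigmaFinite (μ i)] {i j : Fin n} [NullSingletonClass (μ j)]
    (hij : i ≠ j) :
    ∀ᵐ x ∂Measure.pi μ, x i ≠ x j := by
  obtain ⟨m, rfl⟩ : ∃ m, n = m + 1 := Nat.exists_eq_succ_of_ne_zero i.pos.ne'
  obtain ⟨l, rfl⟩ := Fin.exists_succAbove_eq hij.symm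
  have hmeas : MeasurableSet {x : Fin (m + 1) → α | x i = x (i.succAbove l)} :=
    measurableSet_eq_fun (measurable_pi_apply _) (measurable_pi_apply _)
  have hslice (t : α) : Measure.pi (fun j => μ (i.succAbove j)) {y | t = y l} = 0 := by
    simpa only [eq_comm] using Measure.pi_hyperplane (fun j => μ (i.succAbove j)) l t
  simp [ae_iff, measure_pi_eq_lintegral_insertNth μ i hmeas, hslice]

section ArgmaxCell

variable {n m : ℕ}

/-- The samples whose maximum is attained at the coordinate `k`. Ties are allowed, so the cells
cover the whole space and, for atomless laws, are disjoint up to null sets. -/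
def argmaxCell (k : Fin n) : Set (Fin n → ℝ) := {x | ∀ i, x i ≤ x k}

/-- The coordinates of `x` other than the `k`-th, divided by the `k`-th. On `argmaxCell k`
they sum to `(m + 1) * tau x - 1` when `x k ≠ 0`. -/
noncomputable def ratiosTo (k : Fin (m + 1)) (x : Fin (m + 1) → ℝ) : Fin m → ℝ :=
  fun i => k.removeNth x i / x k

theorem measurableSet_argmaxCell (k : Fin n) : MeasurableSet (argmaxCell k) := by
  rw [argmaxCell, ofPred_forall]
  exact .iInter fun i => measurableSet_le (measurable_pi_apply i) (measurable_pi_apply k)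

theorem iUnion_argmaxCell [Nonempty (Fin n)] : ⋃ k : Fin n, argmaxCell k = univ :=
  iUnion_eq_univ_iff.2 Finite.exists_max

theorem pairwise_aedisjoint_argmaxCell (μ : Fin n → Measure ℝ) [∀ i, SigmaFinite (μ i)]
    [∀ i, NullSingletonClass (μ i)] :
    Pairwise (Function.onFun (AEDisjoint (Measure.pi μ)) argmaxCell) :=
  fun i j hij => measure_mono_null (fun _ hx => not_not.2 (le_antisymm (hx.2 i) (hx.1 j)))
    (ae_apply_ne_apply μ hij)

theorem insertNth_mem_argmaxCell {k : Fin (m + 1)} {t : ℝ} {y : Fin m → ℝ} :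
    k.insertNth t y ∈ argmaxCell k ↔ y ∈ univ.pi fun _ => Iic t := by
  simp [argmaxCell, Fin.forall_iff_succAbove k, Pi.le_def]

theorem ratiosTo_insertNth (k : Fin (m + 1)) (t : ℝ) (y : Fin m → ℝ) :
    ratiosTo k (k.insertNth t y) = fun i => y i / t := by
  unfold ratiosTo
  rw [Fin.removeNth_insertNth, Fin.insertNth_apply_same]

theorem measurable_ratiosTo (k : Fin (m + 1)) : Measurable (ratiosTo k) := by
  unfold ratiosTo Fin.removeNth
  fun_prop

theorem sampleMax_eq_of_mem_argmaxCell {k : Fin n} {x : Fin n → ℝ} (hx : x ∈ argmaxCell k) :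
    sampleMax x = x k :=
  have : Nonempty (Fin n) := ⟨k⟩
  le_antisymm (ciSup_le hx) (le_ciSup (finite_range x).bddAbove k)

end ArgmaxCell

section Tau

variable {n m : ℕ}

theorem measurable_tau : Measurable (tau : (Fin n → ℝ) → ℝ) := by
  unfold tau sampleMean sampleMax
  fun_prop

theorem tau_comp_perm (x : Fin n → ℝ) (σ : Equiv.Perm (Fin n)) : tau (x ∘ σ) = tau x := by
  have hmean : sampleMean (x ∘ σ) = sampleMean x :=
    congrArg (· / (n : ℝ)) (Equiv.sum_comp σ x)
  have hmax : sampleMax (x ∘ σ) = sampleMax x := σ.iSup_comp (g := x)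
  rw [tau, tau, hmean, hmax]

theorem mul_tau_sub_one_eq_sum_ratiosTo {k : Fin (m + 1)} {x : Fin (m + 1) → ℝ}
    (hx : x ∈ argmaxCell k) (hk : x k ≠ 0) :
    ((m + 1 : ℕ) : ℝ) * tau x - 1 = ∑ i, ratiosTo k x i := by
  have hm : ((m + 1 : ℕ) : ℝ) ≠ 0 := by positivity
  calc ((m + 1 : ℕ) : ℝ) * tau x - 1
      = (∑ i, x i) / x k - 1 := by
        rw [tau, sampleMean, sampleMax_eq_of_mem_argmaxCell hx, ← mul_div_assoc,
          mul_div_cancel₀ _ hm]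
    _ = (∑ i, k.removeNth x i) / x k := by
        rw [Fin.sum_univ_succAbove x k, add_div, div_self hk, add_sub_cancel_left]
        rfl
    _ = ∑ i, ratiosTo k x i := Finset.sum_div _ _ _

theorem sortedVec_mem_argmaxCell_last (x : Fin (m + 1) → ℝ) :
    sortedVec x ∈ argmaxCell (Fin.last m) :=
  fun i => Tuple.monotone_sort x (Fin.le_last i)

theorem mul_tau_sub_one_eq_sum_sortedVec_div_last {x : Fin (m + 1) → ℝ}
    (h : sortedVec x (Fin.last m) ≠ 0) :
    ((m + 1 : ℕ) : ℝ) * tau x - 1 =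
      ∑ i : Fin m, sortedVec x i.castSucc / sortedVec x (Fin.last m) := by
  rw [← tau_comp_perm x (Tuple.sort x), ← sortedVec]
  simpa [ratiosTo, Fin.removeNth] using
    mul_tau_sub_one_eq_sum_ratiosTo (sortedVec_mem_argmaxCell_last x) h

end Tau

/-- Truncating `μ` to `(-∞, t]` and dividing by `t` yields a multiple of `ν`, for almost every
level `t`. In terms of probability measures: if `X` has law `μ`, then `X / t` given `X ≤ t` has law
`ν`, whatever the level `t`. This is the property of the uniform law behind the theorem. -/
def TruncationsRescaleTo (μ ν : Measure ℝ) : Prop :=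
  ∀ᵐ t ∂μ, (μ.restrict (Iic t)).map (· / t) = μ (Iic t) • ν

namespace TruncationsRescaleTo

variable {m : ℕ} {μ ν : Measure ℝ}

theorem ae_map_div_restrict_pi {ι : Type*} [Fintype ι] [IsFiniteMeasure μ] [SigmaFinite ν]
    (h : TruncationsRescaleTo μ ν) :
    ∀ᵐ t ∂μ, ((Measure.pi fun _ : ι => μ).restrict (univ.pi fun _ => Iic t)).map
        (fun y i => y i / t) = μ (Iic t) ^ Fintype.card ι • Measure.pi fun _ => ν := by
  filter_upwards [h] with t ht
  have hfin : IsFiniteMeasure (μ (Iic t) • ν) := ht ▸ inferInstance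
  rw [Measure.restrict_pi_pi, Measure.pi_map_pi (f := fun _ y => y / t) (fun _ => by fun_prop), ht]
  refine Measure.pi_eq fun s _ => ?_
  simp [Finset.prod_mul_distrib]

theorem map_ratiosTo_restrict_argmaxCell_eq_lintegral_smul [IsFiniteMeasure μ] [SigmaFinite ν]
    (h : TruncationsRescaleTo μ ν) (k : Fin (m + 1)) :
    ((Measure.pi fun _ => μ).restrict (argmaxCell k)).map (ratiosTo k) =
      (∫⁻ t, μ (Iic t) ^ m ∂μ) • Measure.pi fun _ => ν := by
  ext s hs
  have hpre : MeasurableSet (ratiosTo k ⁻¹' s) := measurable_ratiosTo k hs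
  have hslice (t : ℝ) : {y | k.insertNth t y ∈ ratiosTo k ⁻¹' s ∩ argmaxCell k} =
      (fun y i => y i / t) ⁻¹' s ∩ univ.pi fun _ => Iic t := by
    ext y
    exact and_congr (by rw [mem_preimage, ratiosTo_insertNth, mem_preimage])
      insertNth_mem_argmaxCell
  have hdiv (t : ℝ) : Measurable fun (y : Fin m → ℝ) i => y i / t := by fun_prop
  calc ((Measure.pi fun _ => μ).restrict (argmaxCell k)).map (ratiosTo k) s
      = (Measure.pi fun _ => μ) (ratiosTo k ⁻¹' s ∩ argmaxCell k) := by
        rw [Measure.map_apply (measurable_ratiosTo k) hs, Measure.restrict_apply hpre]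
    _ = ∫⁻ t, ((Measure.pi fun _ => μ).restrict (univ.pi fun _ => Iic t)).map
          (fun y i => y i / t) s ∂μ := by
        rw [measure_pi_eq_lintegral_insertNth _ k (hpre.inter (measurableSet_argmaxCell k))]
        simp only [hslice, Measure.map_apply (hdiv _) hs, Measure.restrict_apply (hdiv _ hs)]
    _ = ∫⁻ t, μ (Iic t) ^ m * (Measure.pi fun _ => ν) s ∂μ := by
        refine lintegral_congr_ae ?_
        filter_upwards [h.ae_map_div_restrict_pi (ι := Fin m)] with t ht
        rw [ht, Fintype.card_fin, Measure.smul_apply, smul_eq_mul]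
    _ = (∫⁻ t, μ (Iic t) ^ m ∂μ) * (Measure.pi fun _ => ν) s := by
        refine lintegral_mul_const _ (Measurable.pow_const ?_ m)
        exact Monotone.measurable fun _ _ hst => measure_mono (Iic_subset_Iic.2 hst)

theorem map_ratiosTo_restrict_argmaxCell [IsFiniteMeasure μ] [IsProbabilityMeasure ν]
    (h : TruncationsRescaleTo μ ν) (k : Fin (m + 1)) :
    ((Measure.pi fun _ => μ).restrict (argmaxCell k)).map (ratiosTo k) =
      (Measure.pi fun _ => μ) (argmaxCell k) • Measure.pi fun _ => ν := by
  have hmap := h.map_ratiosTo_restrict_argmaxCell_eq_lintegral_smul k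
  have hmass : (Measure.pi fun _ => μ) (argmaxCell k) = ∫⁻ t, μ (Iic t) ^ m ∂μ := by
    simpa [Measure.map_apply (measurable_ratiosTo k)] using congrArg (· univ) hmap
  rw [hmap, hmass]

theorem map_mul_tau_sub_one [IsProbabilityMeasure μ] [NullSingletonClass μ]
    [IsProbabilityMeasure ν] (h : TruncationsRescaleTo μ ν) (m : ℕ) :
    (Measure.pi fun _ => μ).map (fun x : Fin (m + 1) → ℝ => ((m + 1 : ℕ) : ℝ) * tau x - 1) =
      (Measure.pi fun _ : Fin m => ν).map fun u => ∑ i, u i := by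
  refine map_eq_of_forall_map_restrict_eq ((measurable_tau.const_mul _).sub_const _).aemeasurable
    (fun k => (measurableSet_argmaxCell k).nullMeasurableSet) iUnion_argmaxCell
    (pairwise_aedisjoint_argmaxCell _) fun k => ?_
  have hae : (fun x : Fin (m + 1) → ℝ => ((m + 1 : ℕ) : ℝ) * tau x - 1)
      =ᵐ[(Measure.pi fun _ => μ).restrict (argmaxCell k)] (fun u => ∑ i, u i) ∘ ratiosTo k := by
    filter_upwards [ae_restrict_mem (measurableSet_argmaxCell k),
      ae_restrict_of_ae (Measure.ae_eval_ne (fun _ => μ) k 0)] with x hx hk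
    exact mul_tau_sub_one_eq_sum_ratiosTo hx hk
  rw [Measure.map_congr hae, ← Measure.map_map (by fun_prop) (measurable_ratiosTo k),
    h.map_ratiosTo_restrict_argmaxCell, Measure.map_smul]

end TruncationsRescaleTo

theorem isProbabilityMeasure_uniformMeasure {θ : ℝ} (hθ : 0 < θ) :
    IsProbabilityMeasure (uniformMeasure θ) := by
  constructor
  simp [uniformMeasure, ← ENNReal.ofReal_mul (inv_nonneg.2 hθ.le), inv_mul_cancel₀ hθ.ne']

instance (θ : ℝ) : NullSingletonClass (uniformMeasure θ) :=
  ⟨fun x => by simp [uniformMeasure]⟩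

theorem uniformMeasure_restrict_Iic {θ t : ℝ} (ht : t ≤ θ) :
    (uniformMeasure θ).restrict (Iic t) = ENNReal.ofReal θ⁻¹ • volume.restrict (Icc 0 t) := by
  rw [uniformMeasure, Measure.restrict_smul, Measure.restrict_restrict measurableSet_Iic,
    inter_comm, ← Ici_inter_Iic, inter_assoc, Iic_inter_Iic, inf_eq_right.2 ht, Ici_inter_Iic]

theorem volume_restrict_Icc_map_div {t : ℝ} (ht : 0 < t) :
    (volume.restrict (Icc 0 t)).map (· / t) = ENNReal.ofReal t • volume.restrict (Icc 0 1) := by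
  have hpre : (· / t) ⁻¹' Icc 0 1 = Icc 0 t := by
    ext x
    simp [div_le_one ht, le_div_iff₀ ht]
  have hmap : (volume : Measure ℝ).map (· / t) = ENNReal.ofReal t • volume := by
    simpa [div_eq_mul_inv, abs_of_pos ht] using Real.map_volume_mul_right (inv_ne_zero ht.ne')
  rw [← hpre, ← Measure.restrict_map (by fun_prop) measurableSet_Icc, hmap, Measure.restrict_smul]

theorem uniformMeasure_truncationsRescaleTo (θ : ℝ) :
    TruncationsRescaleTo (uniformMeasure θ) (uniformMeasure 1) := by
  have hmem : ∀ᵐ t ∂uniformMeasure θ, t ∈ Icc 0 θ :=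
    Measure.ae_smul_measure (ae_restrict_mem measurableSet_Icc) _
  filter_upwards [hmem, Measure.ae_ne (uniformMeasure θ) 0] with t ⟨ht₀, htθ⟩ ht
  have htpos : 0 < t := lt_of_le_of_ne ht₀ ht.symm
  rw [← Measure.restrict_apply_univ, uniformMeasure_restrict_Iic htθ, Measure.map_smul,
    volume_restrict_Icc_map_div htpos]
  simp [uniformMeasure, smul_smul]

theorem n_tau_sub_one_irwinHall_general {μ ν : Measure ℝ} [IsProbabilityMeasure μ]
    [NullSingletonClass μ] [IsProbabilityMeasure ν] (h : TruncationsRescaleTo μ ν) (m : ℕ) :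
    (∀ᵐ x ∂Measure.pi fun _ : Fin (m + 1) => μ,
      ((m + 1 : ℕ) : ℝ) * tau x - 1 =
        ∑ i : Fin m, sortedVec x i.castSucc / sortedVec x (Fin.last m)) ∧
    (Measure.pi fun _ : Fin (m + 1) => μ).map (fun x => ((m + 1 : ℕ) : ℝ) * tau x - 1) =
      (Measure.pi fun _ : Fin m => ν).map fun u => ∑ i, u i := by
  refine ⟨?_, h.map_mul_tau_sub_one m⟩
  filter_upwards [ae_all_iff.2 fun i => Measure.ae_eval_ne (fun _ => μ) i 0] with x hx
  exact mul_tau_sub_one_eq_sum_sortedVec_div_last (hx _)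

/-- Under an i.i.d. `Uniform[0,θ]` sample, `n·τ_n − 1 = ∑_{i=1}^{n-1} X_(i)/X_(n)` and it is
distributed as the sum of `n − 1` independent `Uniform[0,1]` variables (Irwin–Hall). -/
theorem n_tau_sub_one_irwinHall
    (n : ℕ) (hn : 2 ≤ n) (θ : ℝ) (hθ : 0 < θ) :
    (∀ᵐ x ∂iidUniform n θ,
      (n : ℝ) * tau x - 1 =
        ∑ i : Fin (n - 1),
          sortedVec x (Fin.castLE (Nat.sub_le n 1) i) / sortedVec x ⟨n - 1, by omega⟩) ∧
    (iidUniform n θ).map (fun x => (n : ℝ) * tau x - 1) = irwinHall (n - 1) := by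
  obtain ⟨m, rfl⟩ : ∃ m, n = m + 1 := ⟨n - 1, by omega⟩
  have := isProbabilityMeasure_uniformMeasure hθ
  have := isProbabilityMeasure_uniformMeasure one_pos
  exact n_tau_sub_one_irwinHall_general (uniformMeasure_truncationsRescaleTo θ) m
end

section
/- Let n ≥ 1, let X_1,…,X_n be i.i.d. Uniform[0,1] random variables with order statistics X_(1) ≤ … ≤ X_(n), and let Y_1,…,Y_{n+1} be i.i.d. Exponential(1) random variables. Then the vector of spacings (X_(1), X_(2) − X_(1), …, X_(n) − X_(n−1), 1 − X_(n)) has the same distribution as (Y_1/S, Y_2/S, …, Y_{n+1}/S) where S = Σ_{i=1}^{n+1} Y_i; that is, the uniform spacings follow the standard Dirichlet distribution Dir(n+1). -/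
open MeasureTheory ProbabilityTheory

/-- The joint law of an i.i.d. sample of size `n` from `Exponential(r)`. -/
noncomputable def iidExp (n : ℕ) (r : ℝ) : Measure (Fin n → ℝ) :=
  Measure.pi fun _ => expMeasure r

/-- The sorted sample extended by `0` below and `1` above:
`(0, X_(1), …, X_(n), 1)`. -/
noncomputable def extendedSorted {n : ℕ} (x : Fin n → ℝ) : Fin (n + 2) → ℝ :=
  Fin.cons 0 (Fin.snoc (sortedVec x) 1)

/-- The spacings `(X_(1), X_(2) − X_(1), …, X_(n) − X_(n-1), 1 − X_(n))` of a sample. -/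
noncomputable def spacings {n : ℕ} (x : Fin n → ℝ) : Fin (n + 1) → ℝ :=
  fun i => extendedSorted x i.succ - extendedSorted x i.castSucc

/-!
Both vectors are uniformly distributed on the standard simplex. Sorting folds the cube onto the
region of increasing vectors, each of the `n!` chambers contributing the same measure, and taking
cumulative sums is a linear map of determinant `1` from the simplex, parametrized by its first `n`
barycentric coordinates, onto that region. On the other side, the density of an i.i.d. exponential
sample depends on the sum `s` of the coordinates only, so in the coordinates `y = s • v`, with `v`
in the simplex, it splits into a factor in `s` and the uniform measure in `v`. The normalizing
constants need not be computed, since both laws are probability measures.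
-/

/-! ### Product measures -/

lemma measurePreserving_pi_comp_equiv {ι κ α : Type*} [Fintype ι] [Fintype κ] [MeasurableSpace α]
    (μ : Measure α) [SigmaFinite μ] (e : ι ≃ κ) :
    MeasurePreserving (fun x : κ → α => x ∘ e) (Measure.pi fun _ => μ)
      (Measure.pi fun _ => μ) :=
  measurePreserving_arrowCongr' (fun _ => μ) (fun _ => μ) e.symm (.refl α) fun _ => .id μ

lemma ae_apply_ne_apply_pi {α : Type*} [MeasurableSpace α] [MeasurableEq α] (μ : Measure α)
    [SigmaFinite μ] [NullSingletonClass μ] {n : ℕ} {i j : Fin n} (hij : i ≠ j) :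
    ∀ᵐ x ∂(Measure.pi fun _ : Fin n => μ), x i ≠ x j := by
  cases n with
  | zero => exact i.elim0
  | succ n =>
    obtain ⟨k, rfl⟩ := Fin.exists_succAbove_eq hij.symm
    have hprod : ∀ᵐ p ∂(μ.prod (Measure.pi fun _ : Fin n => μ)), p.1 ≠ p.2 k := by
      have hmeas : MeasurableSet {p : α × (Fin n → α) | p.1 ≠ p.2 k} :=
        (measurableSet_eq_fun measurable_fst (by fun_prop)).compl
      rw [← Measure.prod_swap, ae_map_iff measurable_swap.aemeasurable hmeas]
      exact (Measure.ae_prod_iff_ae_ae (measurable_swap hmeas)).2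
        (.of_forall fun y => Measure.ae_ne μ (y k))
    exact (measurePreserving_piFinSuccAbove (fun _ => μ) i).quasiMeasurePreserving.ae hprod

lemma ae_injective_pi {ι α : Type*} [Fintype ι] [MeasurableSpace α] [MeasurableEq α]
    (μ : Measure α) [SigmaFinite μ] [NullSingletonClass μ] :
    ∀ᵐ x ∂(Measure.pi fun _ : ι => μ), Function.Injective x := by
  let e := Fintype.equivFin ι
  have hne : ∀ᵐ x ∂(Measure.pi fun _ : Fin (Fintype.card ι) => μ), ∀ i j, i ≠ j → x i ≠ x j :=
    ae_all_iff.2 fun i => ae_all_iff.2 fun j =>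
      Filter.eventually_imp_distrib_left.2 fun hij => ae_apply_ne_apply_pi μ hij
  filter_upwards [(measurePreserving_pi_comp_equiv μ e.symm).quasiMeasurePreserving.ae hne]
    with x hx
  exact (e.symm.injective_comp x).1 fun i j => not_imp_not.1 (hx i j)

lemma lintegral_pi_fin_prod {n : ℕ} {α : Fin n → Type*} [∀ i, MeasurableSpace (α i)]
    (μ : ∀ i, Measure (α i)) [∀ i, SigmaFinite (μ i)] {f : ∀ i, α i → ENNReal}
    (hf : ∀ i, Measurable (f i)) :
    ∫⁻ x, ∏ i, f i (x i) ∂Measure.pi μ = ∏ i, ∫⁻ t, f i t ∂μ i := by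
  induction n with
  | zero => simp
  | succ n ih =>
    have hfm : Measurable fun x : (∀ i : Fin n, α i.succ) => ∏ i, f i.succ (x i) := by fun_prop
    rw [← (measurePreserving_piFinSuccAbove μ 0).symm.lintegral_comp_emb
      (MeasurableEquiv.measurableEmbedding _), Fin.prod_univ_succ,
      ← ih _ fun i => hf _, ← lintegral_prod_mul (hf 0).aemeasurable hfm.aemeasurable]
    simp only [Fin.zero_succAbove, Fin.prod_univ_succ]
    rfl

lemma lintegral_pi_prod {ι : Type*} [Fintype ι] {α : ι → Type*} [∀ i, MeasurableSpace (α i)]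
    (μ : ∀ i, Measure (α i)) [∀ i, SigmaFinite (μ i)] {f : ∀ i, α i → ENNReal}
    (hf : ∀ i, Measurable (f i)) :
    ∫⁻ x, ∏ i, f i (x i) ∂Measure.pi μ = ∏ i, ∫⁻ t, f i t ∂μ i := by
  let e := (Fintype.equivFin ι).symm
  simp_rw [← (measurePreserving_piCongrLeft μ e).lintegral_comp_emb
    (MeasurableEquiv.measurableEmbedding _), ← e.prod_comp, MeasurableEquiv.coe_piCongrLeft,
    Equiv.piCongrLeft_apply_apply]
  exact lintegral_pi_fin_prod _ fun i => hf _

lemma pi_withDensity {ι : Type*} [Fintype ι] {α : ι → Type*} [∀ i, MeasurableSpace (α i)]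
    (μ : ∀ i, Measure (α i)) [∀ i, SigmaFinite (μ i)] {f : ∀ i, α i → ENNReal}
    (hf : ∀ i, Measurable (f i)) [∀ i, SigmaFinite ((μ i).withDensity (f i))] :
    (Measure.pi fun i => (μ i).withDensity (f i)) =
      (Measure.pi μ).withDensity fun x => ∏ i, f i (x i) := by
  refine Measure.pi_eq fun s hs => ?_
  simp_rw [withDensity_apply _ (MeasurableSet.univ_pi hs), withDensity_apply _ (hs _),
    Measure.restrict_pi_pi, lintegral_pi_prod _ hf]

lemma measurePreserving_snoc {α : Type*} [MeasurableSpace α] (μ : Measure α) [SigmaFinite μ]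
    (n : ℕ) :
    MeasurePreserving (fun p : (Fin n → α) × α => (Fin.snoc p.1 p.2 : Fin (n + 1) → α))
      ((Measure.pi fun _ => μ).prod μ) (Measure.pi fun _ => μ) := by
  convert (measurePreserving_piFinSuccAbove (fun _ => μ) (Fin.last n)).symm.comp
    (Measure.measurePreserving_swap (μ := Measure.pi fun _ : Fin n => μ) (ν := μ)) using 1
  funext p
  exact (Fin.insertNth_last' p.2 p.1).symm

lemma lintegral_eq_mul_lintegral_smul {E : Type*} [NormedAddCommGroup E] [NormedSpace ℝ E]
    [MeasurableSpace E] [BorelSpace E] [FiniteDimensional ℝ E] (μ : Measure E)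
    [μ.IsAddHaarMeasure] {s : ℝ} (hs : s ≠ 0) (f : E → ENNReal) :
    ∫⁻ x, f x ∂μ = ENNReal.ofReal |s ^ Module.finrank ℝ E| * ∫⁻ x, f (s • x) ∂μ := by
  have hemb : MeasurableEmbedding fun x : E => s • x :=
    (Homeomorph.smulOfNeZero s hs).measurableEmbedding
  rw [← hemb.lintegral_map, Measure.map_addHaar_smul μ hs, lintegral_smul_measure, smul_eq_mul,
    ← mul_assoc, ← ENNReal.ofReal_mul (abs_nonneg _), ← abs_mul,
    mul_inv_cancel₀ (pow_ne_zero _ hs), abs_one, ENNReal.ofReal_one, one_mul]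

/-! ### The simplex and the Dirichlet distribution -/

/-- The solid simplex of nonnegative vectors of sum at most `1`: the standard simplex of dimension
`n`, parametrized by all barycentric coordinates but the last one. -/
def solidSimplex (n : ℕ) : Set (Fin n → ℝ) := {v | 0 ≤ v ∧ ∑ i, v i ≤ 1}

lemma measurableSet_solidSimplex (n : ℕ) : MeasurableSet (solidSimplex n) :=
  measurableSet_Ici.inter (measurableSet_le
    (f := fun v : Fin n → ℝ => ∑ i, v i) (by fun_prop) measurable_const)

/-- The barycentric coordinates of a point of the solid simplex: a last coordinate is appended,
making the sum equal to `1`. -/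
noncomputable def simplexLift {n : ℕ} (v : Fin n → ℝ) : Fin (n + 1) → ℝ :=
  Fin.snoc v (1 - ∑ i, v i)

lemma measurable_simplexLift {n : ℕ} : Measurable (simplexLift (n := n)) :=
  (continuous_id.finSnoc (by fun_prop)).measurable

lemma nonneg_simplexLift_iff {n : ℕ} {v : Fin n → ℝ} :
    0 ≤ simplexLift v ↔ v ∈ solidSimplex n := by
  simp [simplexLift, solidSimplex, Pi.le_def, Fin.forall_fin_succ']

lemma sum_simplexLift {n : ℕ} (v : Fin n → ℝ) : ∑ i, simplexLift v i = 1 := by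
  simp [simplexLift, Fin.sum_univ_castSucc]

lemma sum_smul_simplexLift {n : ℕ} (s : ℝ) (v : Fin n → ℝ) :
    ∑ i, (s • simplexLift v) i = s := by
  simp [← Finset.mul_sum, sum_simplexLift]

/-- The standard Dirichlet distribution `Dir(n + 1)`, encoded as the uniform distribution on the
solid simplex transported to `ℝⁿ⁺¹` by appending the last barycentric coordinate. -/
noncomputable def standardDirichlet (n : ℕ) : Measure (Fin (n + 1) → ℝ) :=
  (volume[|solidSimplex n]).map simplexLift

lemma eq_standardDirichlet_of_eq_smul {n : ℕ} {ν : Measure (Fin (n + 1) → ℝ)}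
    [IsProbabilityMeasure ν] {c : ENNReal}
    (h : ν = c • (volume.restrict (solidSimplex n)).map simplexLift) :
    ν = standardDirichlet n := by
  have hmass : c * volume (solidSimplex n) = 1 := by
    simpa [h, Measure.map_apply measurable_simplexLift] using measure_univ (μ := ν)
  rw [h, standardDirichlet, ProbabilityTheory.cond, Measure.map_smul,
    ENNReal.eq_inv_of_mul_eq_one_left hmass]

/-! ### Gaps and partial sums -/

/-- The consecutive differences of `(0, z 0, …, z (n - 1), 1)`; the spacings of a sample are the
gaps of its order statistics. -/
noncomputable def gaps {n : ℕ} (z : Fin n → ℝ) : Fin (n + 1) → ℝ :=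
  fun i => (Fin.cons 0 (Fin.snoc z 1) : Fin (n + 2) → ℝ) i.succ -
    (Fin.cons 0 (Fin.snoc z 1) : Fin (n + 2) → ℝ) i.castSucc

lemma measurable_gaps {n : ℕ} : Measurable (gaps (n := n)) := by
  have : Continuous fun z : Fin n → ℝ => (Fin.cons 0 (Fin.snoc z 1) : Fin (n + 2) → ℝ) :=
    continuous_const.finCons (A := fun _ => ℝ)
      (continuous_id.finSnoc (A := fun _ => ℝ) continuous_const)
  unfold gaps
  fun_prop

lemma monotone_snoc_iff {α : Type*} [Preorder α] {n : ℕ} {f : Fin n → α} {b : α} :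
    Monotone (Fin.snoc f b : Fin (n + 1) → α) ↔ Monotone f ∧ ∀ i, f i ≤ b := by
  constructor
  · refine fun h => ⟨fun i j hij => ?_, fun i => ?_⟩
    · simpa using h (Fin.castSucc_le_castSucc_iff.2 hij)
    · simpa using h (Fin.le_last i.castSucc)
  · rintro ⟨hf, hb⟩ i j hij
    induction j using Fin.lastCases with
    | last => induction i using Fin.lastCases <;> simp [hb]
    | cast j =>
      obtain ⟨i, rfl⟩ := Fin.exists_castSucc_eq.2 (hij.trans_lt (Fin.castSucc_lt_last j)).ne
      simpa using hf (Fin.castSucc_le_castSucc_iff.1 hij)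

lemma monotone_cons_iff {α : Type*} [Preorder α] {n : ℕ} {f : Fin n → α} {a : α} :
    Monotone (Fin.cons a f : Fin (n + 1) → α) ↔ (∀ i, a ≤ f i) ∧ Monotone f := by
  simp only [monotone_iff_forall_lt]
  exact Fin.liftFun_cons (· ≤ ·)

lemma nonneg_gaps_iff {n : ℕ} {z : Fin n → ℝ} :
    0 ≤ gaps z ↔ Monotone z ∧ z ∈ Set.Icc 0 1 := by
  have h : 0 ≤ gaps z ↔ Monotone (Fin.cons 0 (Fin.snoc z 1) : Fin (n + 2) → ℝ) := by
    simp [Pi.le_def, gaps, Fin.monotone_iff_le_succ]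
  rw [h, monotone_cons_iff, monotone_snoc_iff]
  simp only [Fin.forall_fin_succ', Fin.snoc_castSucc, Fin.snoc_last, zero_le_one, and_true,
    Set.mem_Icc, Pi.le_def, Pi.zero_apply, Pi.one_apply]
  tauto

lemma partialSum_last {M : Type*} [AddCommMonoid M] {n : ℕ} (u : Fin n → M) :
    Fin.partialSum u (Fin.last n) = ∑ i, u i := by
  rw [Fin.partialSum, Fin.val_last, List.take_of_length_le (by simp), List.sum_ofFn]

lemma partialSum_succ_eq_sum_Iic {M : Type*} [AddCommMonoid M] {n : ℕ} (u : Fin n → M)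
    (i : Fin n) : Fin.partialSum u i.succ = ∑ j ∈ Finset.Iic i, u j := by
  induction n with
  | zero => exact i.elim0
  | succ n ih =>
    induction i using Fin.lastCases with
    | last => rw [Fin.succ_last, partialSum_last, ← Fin.top_eq_last, Finset.Iic_top]
    | cast i =>
      rw [Fin.succ_castSucc, ← Fin.partialSum_init, ih, Fin.sum_Iic_castSucc]
      rfl

/-- The vector of partial sums `(u 0, u 0 + u 1, …, u 0 + ⋯ + u (n - 1))`. -/
def cumSum {n : ℕ} (u : Fin n → ℝ) : Fin n → ℝ := fun i => ∑ j ∈ Finset.Iic i, u j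

lemma gaps_cumSum {n : ℕ} (u : Fin n → ℝ) : gaps (cumSum u) = simplexLift u := by
  have hpartial : (Fin.cons 0 (Fin.snoc (cumSum u) 1) : Fin (n + 2) → ℝ) =
      Fin.partialSum (simplexLift u) := by
    funext i
    induction i using Fin.cases with
    | zero => simp
    | succ i =>
      induction i using Fin.lastCases with
      | last => simp [partialSum_last, sum_simplexLift]
      | cast i =>
        rw [Fin.succ_castSucc, ← Fin.partialSum_init, partialSum_succ_eq_sum_Iic,
          ← Fin.succ_castSucc]
        simp [simplexLift, cumSum]
  funext i
  rw [gaps, hpartial, Fin.partialSum_succ, add_sub_cancel_left]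

lemma measurePreserving_cumSum (n : ℕ) :
    MeasurePreserving (cumSum (n := n)) volume volume := by
  let M : Matrix (Fin n) (Fin n) ℝ := Matrix.of fun i j => if j ≤ i then 1 else 0
  have hdet : M.det = 1 := by
    rw [Matrix.det_of_isLowerTriangular M fun i j hij => by simpa [M] using hij]
    simp [M]
  have hlin : cumSum (n := n) = Matrix.toLin' M := by
    funext u i
    simp [M, cumSum, Matrix.mulVec, dotProduct, ← Finset.sum_filter, Finset.filter_ge_eq_Iic]
  refine ⟨by unfold cumSum; fun_prop, ?_⟩
  rw [hlin, Real.map_matrix_volume_pi_eq_smul_volume_pi (by simp [hdet]), hdet]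
  simp

lemma map_gaps_restrict_nonneg (n : ℕ) :
    (volume.restrict {z : Fin n → ℝ | 0 ≤ gaps z}).map gaps =
      (volume.restrict (solidSimplex n)).map simplexLift := by
  have hpre : cumSum ⁻¹' {z : Fin n → ℝ | 0 ≤ gaps z} = solidSimplex n := by
    ext u
    rw [Set.mem_preimage, Set.mem_ofPred_eq, gaps_cumSum, nonneg_simplexLift_iff]
  have hcomp : gaps ∘ cumSum = simplexLift (n := n) := funext gaps_cumSum
  have hmeas : MeasurableSet {z : Fin n → ℝ | 0 ≤ gaps z} := measurable_gaps measurableSet_Ici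
  have hmp := (measurePreserving_cumSum n).restrict_preimage hmeas
  rw [hpre] at hmp
  rw [← hmp.map_eq, Measure.map_map measurable_gaps hmp.measurable, hcomp]

/-! ### Order statistics -/

lemma sortedVec_eq_comp {n : ℕ} {x : Fin n → ℝ} {σ : Equiv.Perm (Fin n)}
    (h : Monotone (x ∘ σ)) : sortedVec x = x ∘ σ :=
  (Tuple.comp_sort_eq_comp_iff_monotone.2 h).symm

lemma measurableSet_monotone (n : ℕ) : MeasurableSet {z : Fin n → ℝ | Monotone z} :=
  isClosed_monotone.measurableSet

lemma measurable_sortedVec {n : ℕ} : Measurable (sortedVec (n := n)) := by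
  intro s hs
  have hpre : sortedVec ⁻¹' s =
      ⋃ σ : Equiv.Perm (Fin n), (fun x => x ∘ σ) ⁻¹' ({z | Monotone z} ∩ s) := by
    ext x
    simp only [Set.mem_preimage, Set.mem_iUnion, Set.mem_inter_iff, Set.mem_ofPred_eq]
    refine ⟨fun hx => ⟨Tuple.sort x, Tuple.monotone_sort x, hx⟩, ?_⟩
    rintro ⟨σ, hσ, hx⟩
    rwa [sortedVec_eq_comp hσ]
  rw [hpre]
  exact .iUnion fun σ =>
    (show Measurable fun x : Fin n → ℝ => x ∘ σ by fun_prop) ((measurableSet_monotone n).inter hs)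

lemma map_sortedVec_of_exchangeable {n : ℕ} {μ : Measure (Fin n → ℝ)}
    (hperm : ∀ σ : Equiv.Perm (Fin n), MeasurePreserving (fun x => x ∘ σ) μ μ)
    (hinj : ∀ᵐ x ∂μ, Function.Injective x) :
    μ.map sortedVec = (n.factorial : ENNReal) • μ.restrict {z | Monotone z} := by
  let B (σ : Equiv.Perm (Fin n)) : Set (Fin n → ℝ) := {x | Monotone (x ∘ σ)}
  have hB (σ) : MeasurableSet (B σ) := (hperm σ).measurable (measurableSet_monotone n)
  have hcover : ⋃ σ, B σ = Set.univ :=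
    Set.eq_univ_of_forall fun x => Set.mem_iUnion.2 ⟨Tuple.sort x, Tuple.monotone_sort x⟩
  have hdisj : Pairwise (Function.onFun (AEDisjoint μ) B) := by
    intro σ τ hne
    have hnot : B σ ∩ B τ ⊆ {x | ¬Function.Injective x} := fun x hx hxinj =>
      hne (Equiv.ext fun i => hxinj (congrFun (Tuple.unique_monotone hx.1 hx.2) i))
    exact measure_mono_null hnot hinj
  have hpiece (σ) : (μ.restrict (B σ)).map sortedVec = μ.restrict {z | Monotone z} :=
    calc (μ.restrict (B σ)).map sortedVec
        = (μ.restrict (B σ)).map fun x => x ∘ σ :=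
          Measure.map_congr (ae_restrict_of_forall_mem (hB σ) fun x hx => sortedVec_eq_comp hx)
      _ = μ.restrict {z | Monotone z} :=
          ((hperm σ).restrict_preimage (measurableSet_monotone n)).map_eq
  calc μ.map sortedVec
      = (μ.restrict (⋃ σ, B σ)).map sortedVec := by rw [hcover, Measure.restrict_univ]
    _ = ∑ σ, (μ.restrict (B σ)).map sortedVec := by
        rw [Measure.restrict_iUnion_ae hdisj fun σ => (hB σ).nullMeasurableSet,
          Measure.sum_fintype, Measure.map_finset_sum' measurable_sortedVec.aemeasurable]
    _ = (n.factorial : ENNReal) • μ.restrict {z | Monotone z} := by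
        simp only [hpiece, Finset.sum_const, Finset.card_univ, Fintype.card_perm,
          Fintype.card_fin, Nat.cast_smul_eq_nsmul]

lemma uniformMeasure_one : uniformMeasure 1 = volume.restrict (Set.Icc 0 1) := by
  simp [uniformMeasure]

lemma map_sortedVec_iidUniform (n : ℕ) :
    (iidUniform n 1).map sortedVec =
      (n.factorial : ENNReal) • volume.restrict {z | 0 ≤ gaps z} := by
  have hcube : (Measure.pi fun _ : Fin n => volume.restrict (Set.Icc (0 : ℝ) 1)) =
      volume.restrict (Set.Icc 0 1) := by
    rw [← Measure.restrict_pi_pi, ← volume_pi, Set.pi_univ_Icc]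
    rfl
  have hset : ({z | Monotone z} ∩ Set.Icc 0 1 : Set (Fin n → ℝ)) = {z | 0 ≤ gaps z} :=
    Set.ext fun z => nonneg_gaps_iff.symm
  rw [iidUniform, uniformMeasure_one, map_sortedVec_of_exchangeable
    (fun σ => measurePreserving_pi_comp_equiv _ σ) (ae_injective_pi _), hcube,
    Measure.restrict_restrict (measurableSet_monotone n), hset]

lemma map_spacings_iidUniform (n : ℕ) : (iidUniform n 1).map spacings = standardDirichlet n := by
  have hcomp : spacings (n := n) = gaps ∘ sortedVec := rfl
  have hspacings : Measurable (spacings (n := n)) := measurable_gaps.comp measurable_sortedVec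
  have : IsProbabilityMeasure (uniformMeasure 1) := ⟨by simp [uniformMeasure]⟩
  have : IsProbabilityMeasure (iidUniform n 1) := by unfold iidUniform; infer_instance
  have := Measure.isProbabilityMeasure_map (μ := iidUniform n 1) hspacings.aemeasurable
  apply eq_standardDirichlet_of_eq_smul
  rw [hcomp, ← Measure.map_map measurable_gaps measurable_sortedVec, map_sortedVec_iidUniform,
    Measure.map_smul, map_gaps_restrict_nonneg]

/-! ### Normalized exponential samples -/

/-- The vector rescaled by the sum of its coordinates. -/
noncomputable def divSum {ι : Type*} [Fintype ι] (y : ι → ℝ) : ι → ℝ := fun i => y i / ∑ j, y j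

lemma measurable_divSum {ι : Type*} [Fintype ι] : Measurable (divSum (ι := ι)) := by
  unfold divSum
  fun_prop

lemma divSum_smul {ι : Type*} [Fintype ι] {s : ℝ} (hs : s ≠ 0) (y : ι → ℝ) :
    divSum (s • y) = divSum y := by
  funext i
  simp [divSum, ← Finset.mul_sum, mul_div_mul_left _ _ hs]

lemma divSum_simplexLift {n : ℕ} (v : Fin n → ℝ) : divSum (simplexLift v) = simplexLift v := by
  funext i
  rw [divSum, sum_simplexLift, div_one]

lemma measurePreserving_snoc_sub_sum (n : ℕ) :
    MeasurePreserving
      (fun p : (Fin n → ℝ) × ℝ => (Fin.snoc p.1 (p.2 - ∑ i, p.1 i) : Fin (n + 1) → ℝ)) := by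
  have hshear : MeasurePreserving (fun p : (Fin n → ℝ) × ℝ => (p.1, p.2 - ∑ i, p.1 i)) :=
    (MeasurePreserving.id volume).skew_product
      (g := fun (u : Fin n → ℝ) s => s - ∑ i, u i) (by fun_prop)
      (.of_forall fun u => (measurePreserving_sub_right volume (∑ i, u i)).map_eq)
  exact (measurePreserving_snoc volume n).comp hshear

lemma snoc_smul_eq_smul_simplexLift {n : ℕ} (s : ℝ) (v : Fin n → ℝ) :
    (Fin.snoc (s • v) (s - ∑ i, (s • v) i) : Fin (n + 1) → ℝ) = s • simplexLift v := by
  funext i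
  induction i using Fin.lastCases with
  | last => simp [simplexLift, ← Finset.mul_sum, mul_sub]
  | cast i => simp [simplexLift]

lemma lintegral_eq_lintegral_smul_simplexLift {n : ℕ} {F : (Fin (n + 1) → ℝ) → ENNReal}
    (hF : Measurable F) :
    ∫⁻ y, F y = ∫⁻ s : ℝ, ENNReal.ofReal |s ^ n| * ∫⁻ v : Fin n → ℝ, F (s • simplexLift v) := by
  have hmp := measurePreserving_snoc_sub_sum n
  calc ∫⁻ y, F y
      = ∫⁻ p : (Fin n → ℝ) × ℝ, F (Fin.snoc p.1 (p.2 - ∑ i, p.1 i)) :=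
        (hmp.lintegral_comp hF).symm
    _ = ∫⁻ s : ℝ, ∫⁻ u : Fin n → ℝ, F (Fin.snoc u (s - ∑ i, u i)) :=
        lintegral_prod_symm _ (hF.comp hmp.measurable).aemeasurable
    _ = ∫⁻ s : ℝ, ENNReal.ofReal |s ^ n| * ∫⁻ v : Fin n → ℝ, F (s • simplexLift v) := by
        refine lintegral_congr_ae ?_
        filter_upwards [Measure.ae_ne volume (0 : ℝ)] with s hs
        rw [lintegral_eq_mul_lintegral_smul volume hs, Module.finrank_fin_fun]
        simp only [snoc_smul_eq_smul_simplexLift]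

lemma setLIntegral_Ici_zero_eq_lintegral_smul_simplexLift {n : ℕ}
    {F : (Fin (n + 1) → ℝ) → ENNReal} (hF : Measurable F) :
    ∫⁻ y in Set.Ici 0, F y =
      ∫⁻ s in Set.Ioi (0 : ℝ), ENNReal.ofReal (s ^ n) *
        ∫⁻ v in solidSimplex n, F (s • simplexLift v) := by
  rw [← lintegral_indicator measurableSet_Ici, ← lintegral_indicator measurableSet_Ioi,
    lintegral_eq_lintegral_smul_simplexLift (hF.indicator measurableSet_Ici)]
  refine lintegral_congr_ae ?_
  filter_upwards [Measure.ae_ne volume (0 : ℝ)] with s hs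
  rcases hs.lt_or_gt with hneg | hpos
  · have hout (v : Fin n → ℝ) : s • simplexLift v ∉ Set.Ici 0 := fun hv =>
      hneg.not_ge (sum_smul_simplexLift s v ▸ Finset.sum_nonneg fun i _ => hv i)
    simp [hout, hneg.not_gt]
  · have hmem (v : Fin n → ℝ) : s • simplexLift v ∈ Set.Ici 0 ↔ v ∈ solidSimplex n := by
      rw [Set.mem_Ici, smul_nonneg_iff_nonneg_of_pos_left hpos, nonneg_simplexLift_iff]
    rw [Set.indicator_of_mem (Set.mem_Ioi.2 hpos), abs_of_pos (pow_pos hpos n),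
      ← lintegral_indicator (measurableSet_solidSimplex n)]
    classical simp only [Set.indicator_apply, hmem]

lemma map_divSum_withDensity_sum {n : ℕ} {g : ℝ → ENNReal} (hg : Measurable g) :
    ((volume.restrict (Set.Ici (0 : Fin (n + 1) → ℝ))).withDensity
        fun y => g (∑ i, y i)).map divSum =
      (∫⁻ s in Set.Ioi (0 : ℝ), ENNReal.ofReal (s ^ n) * g s) •
        (volume.restrict (solidSimplex n)).map simplexLift := by
  have hgsum : Measurable fun y : Fin (n + 1) → ℝ => g (∑ i, y i) := hg.comp (by fun_prop)
  refine Measure.ext_of_lintegral _ fun f hf => ?_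
  have hfdiv : Measurable fun y : Fin (n + 1) → ℝ => f (divSum y) := hf.comp measurable_divSum
  have hflift : Measurable fun v : Fin n → ℝ => f (simplexLift v) := hf.comp measurable_simplexLift
  rw [lintegral_map hf measurable_divSum, lintegral_withDensity_eq_lintegral_mul _ hgsum hfdiv,
    setLIntegral_Ici_zero_eq_lintegral_smul_simplexLift (hgsum.mul hfdiv),
    lintegral_smul_measure, lintegral_map hf measurable_simplexLift, smul_eq_mul,
    ← lintegral_mul_const _ (by fun_prop)]
  refine setLIntegral_congr_fun measurableSet_Ioi fun s hs => ?_
  simp only [Pi.mul_apply, sum_smul_simplexLift, divSum_smul (ne_of_gt hs), divSum_simplexLift,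
    lintegral_const_mul _ hflift, mul_assoc]

lemma expMeasure_eq_withDensity (r : ℝ) :
    expMeasure r =
      (volume.restrict (Set.Ici 0)).withDensity
        fun t => ENNReal.ofReal (r * Real.exp (-(r * t))) := by
  rw [← withDensity_indicator measurableSet_Ici]
  refine congrArg volume.withDensity (funext fun t => ?_)
  change exponentialPDF r t = _
  simp only [exponentialPDF_eq, Set.indicator_apply, Set.mem_Ici]
  split_ifs <;> simp

lemma iidExp_eq_withDensity {r : ℝ} (hr : 0 < r) (n : ℕ) :
    iidExp n r =
      (volume.restrict (Set.Ici 0)).withDensity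
        fun y => ENNReal.ofReal (r ^ n * Real.exp (-(r * ∑ i, y i))) := by
  have : IsProbabilityMeasure ((volume.restrict (Set.Ici 0)).withDensity
      fun t => ENNReal.ofReal (r * Real.exp (-(r * t)))) :=
    expMeasure_eq_withDensity r ▸ isProbabilityMeasure_expMeasure hr
  have horthant : (Measure.pi fun _ : Fin n => volume.restrict (Set.Ici (0 : ℝ))) =
      volume.restrict (Set.Ici 0) := by
    rw [← Measure.restrict_pi_pi, ← volume_pi, Set.pi_univ_Ici]
    rfl
  have hprod (y : Fin n → ℝ) : ∏ i, ENNReal.ofReal (r * Real.exp (-(r * y i))) =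
      ENNReal.ofReal (r ^ n * Real.exp (-(r * ∑ i, y i))) := by
    rw [← ENNReal.ofReal_prod_of_nonneg fun _ _ => by positivity, Finset.prod_mul_distrib,
      Finset.prod_const, Finset.card_univ, Fintype.card_fin, ← Real.exp_sum,
      Finset.sum_neg_distrib, Finset.mul_sum]
  rw [iidExp, expMeasure_eq_withDensity, pi_withDensity _ fun _ => by fun_prop, horthant]
  simp only [hprod]

lemma map_divSum_iidExp {r : ℝ} (hr : 0 < r) (n : ℕ) :
    (iidExp (n + 1) r).map divSum = standardDirichlet n := by
  have := isProbabilityMeasure_expMeasure hr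
  have : IsProbabilityMeasure (iidExp (n + 1) r) := by unfold iidExp; infer_instance
  have := Measure.isProbabilityMeasure_map (μ := iidExp (n + 1) r) measurable_divSum.aemeasurable
  have hg : Measurable fun s => ENNReal.ofReal (r ^ (n + 1) * Real.exp (-(r * s))) := by fun_prop
  exact eq_standardDirichlet_of_eq_smul
    (iidExp_eq_withDensity hr (n + 1) ▸ map_divSum_withDensity_sum hg)

theorem uniform_spacings_dirichlet_general (n : ℕ) {r : ℝ} (hr : 0 < r) :
    (iidUniform n 1).map (fun x => spacings x) =
      (iidExp (n + 1) r).map (fun y (i : Fin (n + 1)) => y i / ∑ j, y j) :=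
  (map_spacings_iidUniform n).trans (map_divSum_iidExp hr n).symm

/-- The spacings of an i.i.d. `Uniform[0,1]` sample of size `n` have the standard
Dirichlet distribution `Dir(n+1)`: they are distributed as
`(Y_1/S, …, Y_{n+1}/S)` for `Y_i` i.i.d. `Exponential(1)` and `S = ∑ Y_i`. -/
theorem uniform_spacings_dirichlet
    (n : ℕ) (hn : 1 ≤ n) :
    (iidUniform n 1).map (fun x => spacings x) =
      (iidExp (n + 1) 1).map (fun y (i : Fin (n + 1)) => y i / ∑ j, y j) :=
  uniform_spacings_dirichlet_general n one_pos
end
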